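/- arXiv:1810.11386 — 2 statements merged into one kernel-verified Lean document; each statement's English description precedes it below -/
import Mathlib

section
/- For all integers k ≥ 3 and r ≥ 1, one has R_r(2k − 1) − 1 ≥ 2^r · (R_r(k) − 1). -/
open Filter Topology
open scoped ENNReal

/-- `N` has the Ramsey property for the tuple `k`: every `r`-coloring of the
edges of the complete graph on `N` vertices admits a color `i` and a set of
`k i` vertices all of whose connecting edges have color `i`. -/
def ramseyProp {r : ℕ} (k : Fin r → ℕ) (N : ℕ) : Prop :=
  ∀ c : Sym2 (Fin N) → Fin r, ∃ i : Fin r, ∃ S : Finset (Fin N),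
    S.card = k i ∧ ∀ u ∈ S, ∀ v ∈ S, u ≠ v → c s(u, v) = i

/-- The multicolor Ramsey number `R(k 0, …, k (r-1))`: the least positive `N`
with the Ramsey property. -/
noncomputable def multiRamsey {r : ℕ} (k : Fin r → ℕ) : ℕ :=
  sInf {N | 0 < N ∧ ramseyProp k N}

/-- The diagonal multicolor Ramsey number `R_r(k)`. -/
noncomputable def diagRamsey (r k : ℕ) : ℕ :=
  multiRamsey (fun _ : Fin r => k)

/-- DC, the "decreasing conjecture". -/
def DC : Prop :=
  ∀ (r : ℕ), 2 ≤ r → ∀ k : Fin r → ℕ, (∀ l, 2 ≤ k l) →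
    ∀ i j : Fin r, i ≠ j → 3 ≤ k i → k i ≤ k j →
      multiRamsey (fun l => if l = i then k i - 1 else if l = j then k j + 1 else k l)
        ≤ multiRamsey k

/-! A positive number lies below `R(k)` exactly when some coloring on that many vertices avoids
the cliques prescribed by `k`, so lower bounds come from constructing such colorings. (That `R(k)`
is finite follows by induction on `∑ k i`: the neighbors of a vertex in color `i` avoid the cliques
prescribed by `k` with `k i` lowered by one.) Two constructions suffice. Coloring a pair of vectors
in `[q]^r` by a coordinate in which they differ leaves no monochromatic clique on more than `q`
vertices, since its vertices are told apart by one coordinate. In the lexicographic product of two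
colorings, a monochromatic clique projects onto a clique of the first factor and meets every fiber
in a clique of the second, so clique sizes at most multiply. The product of `[q]^r` with an extremal
coloring for `R(k)` gives the bound, and `q = 2` is the case at hand. -/

open Finset

universe u

/-- The edge coloring `c` has only cliques of fewer than `k i` vertices in each color `i`, that is,
it witnesses a lower bound for the Ramsey number of `k`. The values of `c` on the diagonal of
`Sym2 V` are unconstrained. -/
def AvoidsCliques {V κ : Type*} (c : Sym2 V → κ) (k : κ → ℕ) : Prop :=
  ∀ (i : κ) (S : Finset V), (S : Set V).Pairwise (fun u v => c s(u, v) = i) → #S < k i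

/-- The lexicographic product of two edge colorings: a pair in `V × W` is colored by its first
coordinates, unless these agree, in which case it is colored by its second coordinates. -/
def lexColoring {V W κ : Type*} [DecidableEq V] (c : Sym2 V → κ) (d : Sym2 W → κ) :
    Sym2 (V × W) → κ :=
  fun e => if (e.map Prod.fst).IsDiag then d (e.map Prod.snd) else c (e.map Prod.fst)

theorem sum_card_neighborhood_add_one {V κ : Type*} [Fintype V] [Fintype κ] [DecidableEq V]
    [DecidableEq κ] (c : Sym2 V → κ) (v : V) :
    ∑ i, Fintype.card {u // u ≠ v ∧ c s(v, u) = i} + 1 = Fintype.card V := by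
  have hfiber := card_eq_sum_card_fiberwise (s := univ.erase v) (f := fun u => c s(v, u))
    fun _ _ => mem_coe.2 (mem_univ _)
  simp only [Fintype.card_subtype, ← filter_filter, filter_ne']
  rw [← hfiber, card_erase_add_one (mem_univ v), card_univ]

namespace AvoidsCliques

section Constructions

variable {V W κ : Type*} {c : Sym2 V → κ} {d : Sym2 W → κ} {k l : κ → ℕ}

theorem pos (hc : AvoidsCliques c k) (i : κ) : 0 < k i := by
  simpa using hc i ∅ (by simp)

theorem comp_map (hc : AvoidsCliques c k) (f : W ↪ V) : AvoidsCliques (c ∘ Sym2.map f) k := by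
  intro i S hS
  rw [← card_map f]
  refine hc i _ ?_
  rw [coe_map]
  exact f.injective.injOn.pairwise_image.2 hS

theorem neighborhood [DecidableEq κ] (hc : AvoidsCliques c k) (v : V) (i : κ) :
    AvoidsCliques (c ∘ Sym2.map ((↑) : {u // u ≠ v ∧ c s(v, u) = i} → V))
      (Function.update k i (k i - 1)) := by
  classical
  intro j S hS
  obtain rfl | hji := eq_or_ne j i
  · let T := S.map (Function.Embedding.subtype _)
    have hT : (T : Set V).Pairwise fun u w => c s(u, w) = j := by
      rw [coe_map]
      exact Subtype.val_injective.injOn.pairwise_image.2 hS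
    have hTv : ∀ u ∈ T, u ≠ v ∧ c s(v, u) = j := by
      intro u hu
      obtain ⟨w, -, rfl⟩ := mem_map.1 hu
      exact w.2
    have hinsert : ((insert v T : Finset V) : Set V).Pairwise fun u w => c s(u, w) = j := by
      rw [coe_insert, Set.pairwise_insert]
      exact ⟨hT, fun u hu _ => ⟨(hTv u hu).2, Sym2.eq_swap ▸ (hTv u hu).2⟩⟩
    have hcard : #(insert v T) < k j := hc j _ hinsert
    rw [card_insert_of_notMem fun hv => (hTv v hv).1 rfl, card_map] at hcard
    rw [Function.update_self]
    omega
  · rw [Function.update_of_ne hji]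
    exact hc.comp_map (Function.Embedding.subtype _) j S hS

theorem lex [DecidableEq V] (hc : AvoidsCliques c k) (hd : AvoidsCliques d l) :
    AvoidsCliques (lexColoring c d) fun i => (l i - 1) * (k i - 1) + 1 := by
  classical
  intro i S hS
  have hbase : #(S.image Prod.fst) ≤ k i - 1 := by
    refine Nat.le_sub_one_of_lt (hc i _ ?_)
    rw [coe_image]
    rintro _ ⟨p, hp, rfl⟩ _ ⟨q, hq, rfl⟩ hpq
    simpa [lexColoring, hpq] using hS hp hq (ne_of_apply_ne _ hpq)
  have hfiber : ∀ v, #{p ∈ S | p.1 = v} ≤ l i - 1 := by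
    intro v
    have hinj : Set.InjOn Prod.snd (({p ∈ S | p.1 = v} : Finset (V × W)) : Set (V × W)) := by
      intro p hp q hq hpq
      exact Prod.ext ((mem_filter.1 hp).2.trans (mem_filter.1 hq).2.symm) hpq
    rw [← card_image_of_injOn hinj]
    refine Nat.le_sub_one_of_lt (hd i _ ?_)
    rw [coe_image, hinj.pairwise_image]
    intro p hp q hq hpq
    obtain ⟨hpS, rfl⟩ := mem_filter.1 hp
    obtain ⟨hqS, hqp⟩ := mem_filter.1 hq
    simpa [lexColoring, hqp] using hS hpS hqS hpq
  exact Nat.lt_succ_of_le <|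
    (card_le_mul_card_image S _ fun v _ => hfiber v).trans (Nat.mul_le_mul_left _ hbase)

theorem of_separating {ι α : Type*} [Fintype α] {c : Sym2 (ι → α) → ι}
    (hc : ∀ x y : ι → α, x ≠ y → x (c s(x, y)) ≠ y (c s(x, y))) :
    AvoidsCliques c fun _ => Fintype.card α + 1 := by
  intro i S hS
  have hinj : Set.InjOn (fun x : ι → α => x i) S := by
    intro x hx y hy hxy
    by_contra hne
    exact hc x y hne (by rwa [hS hx hy hne])
  exact Nat.lt_succ_of_le (card_le_card_of_injOn _ (fun _ _ => mem_univ _) hinj)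

end Constructions

theorem card_lt_pow {V : Type u} {κ : Type*} [Fintype V] [Fintype κ] {c : Sym2 V → κ} {k : κ → ℕ}
    (hc : AvoidsCliques c k) : Fintype.card V < (Fintype.card κ + 1) ^ ∑ i, k i := by
  classical
  induction hn : ∑ i, k i generalizing V k with
  | zero =>
    have : IsEmpty V := ⟨fun v => (hc.pos (c s(v, v))).ne' (sum_eq_zero_iff.1 hn _ (mem_univ _))⟩
    simp
  | succ n ih =>
    obtain hV | ⟨⟨v⟩⟩ := isEmpty_or_nonempty V
    · simp
    have hκ : 0 < Fintype.card κ := Fintype.card_pos_iff.2 ⟨c s(v, v)⟩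
    let N (i : κ) := {u // u ≠ v ∧ c s(v, u) = i}
    have hN (i : κ) : Fintype.card (N i) + 1 ≤ (Fintype.card κ + 1) ^ n := by
      refine ih (hc.neighborhood v i) ?_
      have hsplit := add_sum_erase univ k (mem_univ i)
      have := hc.pos i
      rw [sum_update_of_mem (mem_univ i), sdiff_singleton_eq_erase]
      omega
    have hcard : ∑ i, Fintype.card (N i) + 1 = Fintype.card V :=
      sum_card_neighborhood_add_one c v
    have hsum : ∑ i, Fintype.card (N i) + Fintype.card κ
        ≤ Fintype.card κ * (Fintype.card κ + 1) ^ n := by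
      simpa [sum_add_distrib] using sum_le_sum fun i (_ : i ∈ univ) => hN i
    calc Fintype.card V ≤ Fintype.card κ * (Fintype.card κ + 1) ^ n := by omega
      _ < (Fintype.card κ + 1) * (Fintype.card κ + 1) ^ n := by gcongr; omega
      _ = (Fintype.card κ + 1) ^ (n + 1) := (pow_succ' _ _).symm

end AvoidsCliques

theorem exists_separating_coloring (ι α : Type*) [Nonempty ι] :
    ∃ c : Sym2 (ι → α) → ι, ∀ x y : ι → α, x ≠ y → x (c s(x, y)) ≠ y (c s(x, y)) := by
  have hpair (e : Sym2 (ι → α)) : ∃ i, ∀ x y, e = s(x, y) → x ≠ y → x i ≠ y i := by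
    induction e with | _ x y
    by_cases hxy : x = y
    · exact ⟨Classical.arbitrary ι, by grind⟩
    · obtain ⟨i, hi⟩ := Function.ne_iff.1 hxy
      exact ⟨i, by grind⟩
  choose c hc using hpair
  exact ⟨c, fun x y => hc _ x y rfl⟩

section Ramsey

variable {r : ℕ} {k : Fin r → ℕ}

theorem ramseyProp_iff_forall_not_avoidsCliques {N : ℕ} :
    ramseyProp k N ↔ ∀ c : Sym2 (Fin N) → Fin r, ¬ AvoidsCliques c k := by
  refine forall_congr' fun c => ?_
  simp only [AvoidsCliques, not_forall, not_lt]
  constructor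
  · rintro ⟨i, S, hcard, hS⟩
    exact ⟨i, S, hS, hcard.ge⟩
  · rintro ⟨i, S, hS, hcard⟩
    obtain ⟨T, hTS, hT⟩ := exists_subset_card_eq hcard
    exact ⟨i, T, hT, hS.mono hTS⟩

theorem ramseyProp_pow (k : Fin r → ℕ) : ramseyProp k ((r + 1) ^ ∑ i, k i) :=
  ramseyProp_iff_forall_not_avoidsCliques.2 fun _ hc => by simpa using hc.card_lt_pow

theorem ramseyProp_multiRamsey (k : Fin r → ℕ) : ramseyProp k (multiRamsey k) :=
  have hne : {N | 0 < N ∧ ramseyProp k N}.Nonempty := ⟨_, by positivity, ramseyProp_pow k⟩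
  (Nat.sInf_mem hne).2

theorem AvoidsCliques.card_lt_multiRamsey {V : Type*} [Fintype V] {c : Sym2 V → Fin r}
    (hc : AvoidsCliques c k) : Fintype.card V < multiRamsey k := by
  by_contra! hle
  obtain ⟨f⟩ : Nonempty (Fin (multiRamsey k) ↪ V) :=
    Function.Embedding.nonempty_of_card_le (by simpa using hle)
  exact ramseyProp_iff_forall_not_avoidsCliques.1 (ramseyProp_multiRamsey k) _ (hc.comp_map f)

theorem exists_avoidsCliques_of_lt_multiRamsey {N : ℕ} (hpos : 0 < N) (hN : N < multiRamsey k) :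
    ∃ c : Sym2 (Fin N) → Fin r, AvoidsCliques c k := by
  by_contra! hnone
  exact Nat.notMem_of_lt_sInf hN ⟨hpos, ramseyProp_iff_forall_not_avoidsCliques.2 hnone⟩

theorem AvoidsCliques.card_mul_multiRamsey_sub_one_le {V : Type*} [Fintype V] {c : Sym2 V → Fin r}
    {l : Fin r → ℕ} (hc : AvoidsCliques c l) (k : Fin r → ℕ) :
    Fintype.card V * (multiRamsey k - 1)
      ≤ multiRamsey (fun i => (k i - 1) * (l i - 1) + 1) - 1 := by
  classical
  obtain hzero | hpos := Nat.eq_zero_or_pos (multiRamsey k - 1)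
  · simp [hzero]
  obtain ⟨d, hd⟩ := exists_avoidsCliques_of_lt_multiRamsey hpos (Nat.sub_one_lt (by omega))
  simpa using Nat.le_sub_one_of_lt (hc.lex hd).card_lt_multiRamsey

theorem stmt10_general (q : ℕ) (hr : 1 ≤ r) (k : Fin r → ℕ) :
    q ^ r * (multiRamsey k - 1) ≤ multiRamsey (fun i => q * (k i - 1) + 1) - 1 := by
  have : Nonempty (Fin r) := ⟨⟨0, hr⟩⟩
  obtain ⟨c, hc⟩ := exists_separating_coloring (Fin r) (Fin q)
  simpa [mul_comm] using (AvoidsCliques.of_separating hc).card_mul_multiRamsey_sub_one_le k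

end Ramsey

/-- `R_r(2k − 1) − 1 ≥ 2^r · (R_r(k) − 1)` for `k ≥ 3`, `r ≥ 1`. -/
theorem stmt10 (k r : ℕ) (hk : 3 ≤ k) (hr : 1 ≤ r) :
    2 ^ r * (diagRamsey r k - 1) ≤ diagRamsey r (2 * k - 1) - 1 := by
  have hk' : 2 * k - 1 = 2 * (k - 1) + 1 := by omega
  exact hk' ▸ stmt10_general 2 hr fun _ => k
end

section
/- If DC holds, then either L_k is finite for every integer k ≥ 3, or L_k = +∞ for every integer k ≥ 3. -/
open Filter Topology
open scoped ENNReal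

/-!
Adding a color with parameter at least `2` can only increase a Ramsey number, since a coloring
that avoids the new color contains no edge, hence no large enough clique, of that color.

For `k ≥ 3`, start from `2m` colors with parameter `k`, pair them up, and let DC replace each pair
`(k, k)` by `(k - 1, k + 1)`. As `k - 1 ≥ 2`, the `m` colors with parameter `k - 1` can then be
forgotten, so `R_m(k + 1) ≤ R_{2m}(k)`, that is, `L_{k+1} ≤ L_k ^ 2` in the limit. Together with
`L_3 ≤ L_k` this lets the finiteness of `L_3` decide that of every `L_k`.
-/

section Monochromatic

variable {V ι : Type*} {c : Sym2 V → ι} {i : ι} {S T : Finset V}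

/-- `S` is a monochromatic clique of color `i` for the edge coloring `c`. The values of `c` on the
diagonal of `Sym2 V`, which are not edges, are ignored. -/
def IsMonochromatic (c : Sym2 V → ι) (i : ι) (S : Finset V) : Prop :=
  ∀ u ∈ S, ∀ v ∈ S, u ≠ v → c s(u, v) = i

theorem IsMonochromatic.mono (h : IsMonochromatic c i T) (hST : S ⊆ T) : IsMonochromatic c i S :=
  fun u hu v hv => h u (hST hu) v (hST hv)

theorem IsMonochromatic.insert [DecidableEq V] {v : V} (h : IsMonochromatic c i S)
    (hv : ∀ u ∈ S, c s(v, u) = i) : IsMonochromatic c i (insert v S) := by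
  intro u hu w hw huw
  rcases Finset.mem_insert.1 hu with rfl | huS <;>
    rcases Finset.mem_insert.1 hw with rfl | hwS
  · exact absurd rfl huw
  · exact hv w hwS
  · exact Sym2.eq_swap ▸ hv u huS
  · exact h u huS w hwS huw

end Monochromatic

section RamseyTheorem

variable {r : ℕ} {k : Fin r → ℕ}

theorem ramseyProp.exists_subset {N : ℕ} (h : ramseyProp k N) {V : Type*} (c : Sym2 V → Fin r)
    {A : Finset V} (hA : N ≤ A.card) :
    ∃ i, ∃ S ⊆ A, S.card = k i ∧ IsMonochromatic c i S := by
  obtain ⟨B, hBA, hB⟩ := Finset.exists_subset_card_eq hA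
  let e : Fin N ↪ V := (B.equivFinOfCardEq hB).symm.toEmbedding.trans (.subtype (· ∈ B))
  obtain ⟨i, S, hcard, hS⟩ := h fun x => c (x.map e)
  refine ⟨i, S.map e, fun x hx => ?_, by rw [Finset.card_map, hcard], fun x hx y hy hxy => ?_⟩
  · obtain ⟨u, -, rfl⟩ := Finset.mem_map.1 hx
    exact hBA (Subtype.prop _)
  · obtain ⟨u, hu, rfl⟩ := Finset.mem_map.1 hx
    obtain ⟨v, hv, rfl⟩ := Finset.mem_map.1 hy
    exact hS u hu v hv (ne_of_apply_ne e hxy)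

theorem ramseyProp_one_add_sum (hk : ∀ i, k i ≠ 0) {M : Fin r → ℕ}
    (hM : ∀ i, ramseyProp (Function.update k i (k i - 1)) (M i)) :
    ramseyProp k (1 + ∑ i, M i) := by
  intro c
  let v : Fin (1 + ∑ i, M i) := ⟨0, by omega⟩
  let neighbors (i : Fin r) := (Finset.univ.erase v).filter fun u => c s(v, u) = i
  -- The diagonal value `c s(v, v)` only serves to show that there is a color at all.
  obtain ⟨i, -, hi⟩ : ∃ i ∈ Finset.univ, M i ≤ (neighbors i).card := by
    refine Finset.exists_le_of_sum_le ⟨c s(v, v), Finset.mem_univ _⟩ (le_of_eq ?_)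
    rw [← Finset.card_eq_sum_card_fiberwise fun _ _ => Finset.mem_coe.2 (Finset.mem_univ _)]
    simp
  obtain ⟨j, S, hS_sub, hS_card, hS⟩ := (hM i).exists_subset c hi
  by_cases hji : j = i
  · subst hji
    have hvS : v ∉ S := fun hv => by simpa [neighbors] using hS_sub hv
    refine ⟨j, insert v S, ?_, hS.insert fun u hu => (Finset.mem_filter.1 (hS_sub hu)).2⟩
    rw [Finset.card_insert_of_notMem hvS, hS_card, Function.update_self]
    exact Nat.succ_pred (hk j)
  · exact ⟨j, S, hS_card.trans (Function.update_of_ne hji _ _), hS⟩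

theorem exists_ramseyProp (k : Fin r → ℕ) : ∃ N, 0 < N ∧ ramseyProp k N := by
  induction k using WellFoundedLT.induction with
  | ind k ih =>
  by_cases hk : ∀ i, k i ≠ 0
  · choose M _ hM using fun i =>
      ih (Function.update k i (k i - 1)) (update_lt_self_iff.2 (Nat.pred_lt (hk i)))
    exact ⟨1 + ∑ i, M i, by omega, ramseyProp_one_add_sum hk hM⟩
  · push Not at hk
    obtain ⟨i, hi⟩ := hk
    exact ⟨1, one_pos, fun c => ⟨i, ∅, by simp [hi], by simp⟩⟩

end RamseyTheorem

section Monotonicity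

variable {r s : ℕ}

theorem multiRamsey_le_of_ramseyProp_imp {k : Fin r → ℕ} {l : Fin s → ℕ}
    (h : ∀ N, ramseyProp l N → ramseyProp k N) : multiRamsey k ≤ multiRamsey l :=
  csInf_le_csInf' (exists_ramseyProp l) fun N hN => ⟨hN.1, h N hN.2⟩

theorem multiRamsey_mono : Monotone (multiRamsey (r := r)) := by
  refine fun k l hkl => multiRamsey_le_of_ramseyProp_imp fun N hN c => ?_
  obtain ⟨i, S, hcard, hS⟩ := hN c
  obtain ⟨T, hTS, hT⟩ := Finset.exists_subset_card_eq (hcard ▸ hkl i)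
  exact ⟨i, T, hT, IsMonochromatic.mono hS hTS⟩

theorem diagRamsey_mono (r : ℕ) : Monotone (diagRamsey r) :=
  fun _ _ h => multiRamsey_mono fun _ => h

theorem multiRamsey_comp_le {f : Fin r → Fin s} (hf : Function.Injective f) {l : Fin s → ℕ}
    (hl : ∀ i ∉ Set.range f, 2 ≤ l i) : multiRamsey (l ∘ f) ≤ multiRamsey l := by
  refine multiRamsey_le_of_ramseyProp_imp fun N hN c => ?_
  obtain ⟨j, S, hcard, hS⟩ := hN (f ∘ c)
  have hj : j ∈ Set.range f := by
    by_contra hj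
    obtain ⟨u, hu, v, hv, huv⟩ := Finset.one_lt_card.1 (hcard ▸ hl j hj)
    exact hj ⟨_, hS u hu v hv huv⟩
  obtain ⟨i, rfl⟩ := hj
  exact ⟨i, S, hcard, fun u hu v hv huv => hf (hS u hu v hv huv)⟩

theorem multiRamsey_le_append {a : Fin r → ℕ} (ha : ∀ i, 2 ≤ a i) (b : Fin s → ℕ) :
    multiRamsey b ≤ multiRamsey (Fin.append a b) := by
  have h := multiRamsey_comp_le (Fin.natAdd_injective s r) (l := Fin.append a b) fun i hi => by
    induction i using Fin.addCases with
    | left i => simpa using ha i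
    | right i => exact absurd (Set.mem_range_self i) hi
  rwa [show Fin.append a b ∘ Fin.natAdd r = b from funext (Fin.append_right a b)] at h

end Monotonicity

section TupleAppend

variable {α : Type*} {m n : ℕ}

theorem castAdd_ne_natAdd (i : Fin m) (j : Fin n) : Fin.castAdd n i ≠ Fin.natAdd m j :=
  Fin.ne_of_val_ne (by simp only [Fin.val_castAdd, Fin.val_natAdd]; omega)

theorem append_update_left (a : Fin m → α) (b : Fin n → α) (i : Fin m) (x : α) :
    Fin.append (Function.update a i x) b =
      Function.update (Fin.append a b) (Fin.castAdd n i) x := by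
  funext l
  induction l using Fin.addCases with
  | left l => simp [Function.update_apply]
  | right l => simp [(castAdd_ne_natAdd i l).symm]

theorem append_update_right (a : Fin m → α) (b : Fin n → α) (j : Fin n) (x : α) :
    Fin.append a (Function.update b j x) =
      Function.update (Fin.append a b) (Fin.natAdd m j) x := by
  funext l
  induction l using Fin.addCases with
  | left l => simp [castAdd_ne_natAdd l j]
  | right l => simp [Function.update_apply]

end TupleAppend

section DecreasingConjecture

theorem DC.multiRamsey_update_le (hDC : DC) {r : ℕ} {k : Fin r → ℕ} (hk : ∀ l, 2 ≤ k l)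
    {i j : Fin r} (hij : i ≠ j) (hi : 3 ≤ k i) (hle : k i ≤ k j) :
    multiRamsey (Function.update (Function.update k j (k j + 1)) i (k i - 1)) ≤ multiRamsey k := by
  have hr : 2 ≤ r := by have := Fin.val_ne_of_ne hij; omega
  refine le_of_eq_of_le (congrArg multiRamsey (funext fun l => ?_)) (hDC r hr k hk i j hij hi hle)
  simp only [Function.update_apply]

theorem DC.multiRamsey_append_update_le (hDC : DC) {m n : ℕ} {a : Fin m → ℕ} {b : Fin n → ℕ}
    (ha : ∀ t, 2 ≤ a t) (hb : ∀ t, 2 ≤ b t) {i : Fin m} {j : Fin n} (hi : 3 ≤ a i)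
    (hij : a i ≤ b j) :
    multiRamsey (Fin.append (Function.update a i (a i - 1)) (Function.update b j (b j + 1))) ≤
      multiRamsey (Fin.append a b) := by
  have hab : ∀ l, 2 ≤ Fin.append a b l :=
    Fin.addCases (by simpa only [Fin.append_left]) (by simpa only [Fin.append_right])
  have h := hDC.multiRamsey_update_le hab (castAdd_ne_natAdd i j)
  simp only [Fin.append_left, Fin.append_right] at h
  rw [append_update_left, append_update_right]
  exact h hi hij

variable {m : ℕ} {a b : Fin m → ℕ}

theorem DC.multiRamsey_append_piecewise_le (hDC : DC) (ha : ∀ t, 3 ≤ a t) (hab : a ≤ b)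
    (T : Finset (Fin m)) :
    multiRamsey (Fin.append (T.piecewise (a - 1) a) (T.piecewise (b + 1) b)) ≤
      multiRamsey (Fin.append a b) := by
  induction T using Finset.induction with
  | empty => simp only [Finset.piecewise_empty, le_rfl]
  | insert t T ht ih =>
    have ha' : ∀ s, 2 ≤ T.piecewise (a - 1) a s :=
      T.le_piecewise_of_le_of_le (fun s => Nat.le_sub_one_of_lt (ha s)) fun s => Nat.le_of_lt (ha s)
    have hb : (fun _ => 2) ≤ b := fun s => (Nat.le_of_lt (ha s)).trans (hab s)
    have hb' : ∀ s, 2 ≤ T.piecewise (b + 1) b s :=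
      T.le_piecewise_of_le_of_le (hb.trans le_self_add) hb
    have hstep := hDC.multiRamsey_append_update_le ha' hb' (i := t) (j := t)
    simp only [Finset.piecewise_eq_of_notMem _ _ _ ht] at hstep
    rw [Finset.piecewise_insert, Finset.piecewise_insert]
    exact (hstep (ha t) (hab t)).trans ih

theorem DC.multiRamsey_add_one_le (hDC : DC) (ha : ∀ t, 3 ≤ a t) (hab : a ≤ b) :
    multiRamsey (b + 1) ≤ multiRamsey (Fin.append a b) := by
  have htrade := hDC.multiRamsey_append_piecewise_le ha hab Finset.univ
  rw [Finset.piecewise_univ, Finset.piecewise_univ] at htrade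
  exact (multiRamsey_le_append (fun t => Nat.le_sub_one_of_lt (ha t)) _).trans htrade

theorem DC.diagRamsey_add_one_le (hDC : DC) (m : ℕ) {k : ℕ} (hk : 3 ≤ k) :
    diagRamsey m (k + 1) ≤ diagRamsey (2 * m) k := by
  have h := hDC.multiRamsey_add_one_le (m := m) (fun _ => hk) (le_refl fun _ => k)
  rw [show Fin.append (fun _ : Fin m => k) (fun _ => k) = fun _ => k from
    funext <| Fin.addCases (Fin.append_left _ _) (Fin.append_right _ _)] at h
  rwa [two_mul]

end DecreasingConjecture

theorem tendsto_comp_mul_rpow_one_div {u : ℕ → ℝ≥0∞} {x : ℝ≥0∞}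
    (h : Tendsto (fun r : ℕ => u r ^ (1 / (r : ℝ))) atTop (𝓝 x)) {c : ℕ} (hc : c ≠ 0) :
    Tendsto (fun m : ℕ => u (c * m) ^ (1 / (m : ℝ))) atTop (𝓝 (x ^ c)) := by
  have hpow (m : ℕ) (y : ℝ≥0∞) : (y ^ (1 / ((c * m : ℕ) : ℝ))) ^ c = y ^ (1 / (m : ℝ)) := by
    rw [← ENNReal.rpow_mul_natCast]
    congr 1
    push_cast
    field_simp
  have hsub := h.comp (tendsto_id.const_mul_atTop' (Nat.pos_of_ne_zero hc))
  simpa only [Function.comp_def, id_eq, hpow] using ENNReal.Tendsto.pow (n := c) hsub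

/-- if DC holds, then either `L_k` is finite for every `k ≥ 3`, or
`L_k = +∞` for every `k ≥ 3`, where `L j` is the limit of `r ↦ R_r(j)^{1/r}`
in `[0, ∞]`. -/
theorem stmt13 (hDC : DC) (L : ℕ → ℝ≥0∞)
    (hL : ∀ j, 2 ≤ j →
      Tendsto (fun r : ℕ => ((diagRamsey r j : ℝ≥0∞)) ^ (1 / (r : ℝ))) atTop (𝓝 (L j))) :
    (∀ k, 3 ≤ k → L k ≠ ⊤) ∨ (∀ k, 3 ≤ k → L k = ⊤) := by
  have hmono : ∀ k, 3 ≤ k → L 3 ≤ L k := fun k hk =>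
    le_of_tendsto_of_tendsto' (hL 3 (by omega)) (hL k (by omega)) fun r =>
      ENNReal.rpow_le_rpow (Nat.cast_le.2 (diagRamsey_mono r hk)) (by positivity)
  have hsq : ∀ k, 3 ≤ k → L (k + 1) ≤ L k ^ 2 := fun k hk =>
    le_of_tendsto_of_tendsto' (hL (k + 1) (by omega))
      (tendsto_comp_mul_rpow_one_div (hL k (by omega)) two_ne_zero) fun m =>
        ENNReal.rpow_le_rpow (Nat.cast_le.2 (hDC.diagRamsey_add_one_le m hk)) (by positivity)
  by_cases h3 : L 3 = ⊤
  · exact Or.inr fun k hk => top_le_iff.1 (h3 ▸ hmono k hk)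
  · refine Or.inl fun k hk => ?_
    induction k, hk using Nat.le_induction with
    | base => exact h3
    | succ k hk ih => exact ne_top_of_le_ne_top (ENNReal.pow_ne_top ih) (hsq k hk)
end
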